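/- The symmetric algebra S(I) ≅ T/I_1(A,n−1) of the ideal I = I_{n−1}(A) of (n−1)-fold products has depth exactly k+1 with respect to the graded maximal ideal ⟨x_1,...,x_k,y_1,...,y_n⟩ of T: the maximal length of a regular sequence on T/I_1(A,n−1) consisting of elements of ⟨x_1,...,x_k,y_1,...,y_n⟩ is k+1 (equivalently, the projective dimension of T/I_1(A,n−1) over T is n−1). -/

import Mathlib

set_option synthInstance.maxHeartbeats 1000000
set_option maxHeartbeats 1000000

open MvPolynomial Finset

/-!
For the lower bound, fix an index `o`, put `s = ℓ_o y_o`, and adjoin the relations `s - ℓ_j y_j`,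
`j ≠ o`, one at a time. Viewed as a polynomial in `y_j`, such a relation is linear with leading
coefficient `ℓ_j`, and modulo the ideal `J` of the earlier relations it has the same annihilator as
`ℓ_j`. Adjoining it therefore costs at most as much depth as adjoining `ℓ_j` does, and the quotients
of `T/J` by linear forms are controlled by the same induction. The depth thus drops from `k + n` to
at least `k + n - (n - 1) = k + 1`.

For the upper bound, the kernel of the map onto the Rees algebra lies in the maximal ideal, so it
contains a minimal prime `P` of `I_1`, and `P` avoids every `ℓ_j`. Modulo `P` each `y_j` is
algebraic over `x_1, …, x_k, y_o`, so `T/P` has transcendence degree at most `k + 1`. For every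
associated prime contained in the maximal ideal, that degree bounds the length of a regular
sequence.
-/

namespace ArrangementDepth

universe u v w

section ExtVanishing

open CategoryTheory Abelian

variable {C : Type u} [Category.{v} C] [Abelian C] [HasExt.{w} C]

/-- `Ext i N M` vanishes for all `i < d`. By Rees' theorem, for `N = T ⧸ 𝔪` this says that the
`𝔪`-depth of the module `M` is at least `d`. -/
def ExtVanishesBelow (N M : C) (d : ℕ) : Prop :=
  ∀ i < d, Subsingleton (Ext.{w} N M i)

lemma ExtVanishesBelow.mono {N M : C} {d e : ℕ} (h : ExtVanishesBelow N M d) (hed : e ≤ d) :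
    ExtVanishesBelow N M e :=
  fun i hi => h i (hi.trans_le hed)

lemma ExtVanishesBelow.left_of_comp_eq_zero {S : ShortComplex C} (hS : S.ShortExact) {N : C}
    {d : ℕ} (hf : ∀ i < d + 1, ∀ x : Ext N S.X₁ i, x.comp (Ext.mk₀ S.f) (add_zero i) = 0)
    (h₃ : ExtVanishesBelow N S.X₃ d) : ExtVanishesBelow N S.X₁ (d + 1) := by
  intro i hi
  refine subsingleton_of_forall_eq 0 fun x => ?_
  cases i with
  | zero =>
    have := hS.mono_f
    exact Ext.postcomp_mk₀_injective_of_mono N S.f ((hf 0 hi x).trans (hf 0 hi 0).symm)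
  | succ i =>
    have := h₃ i (by omega)
    obtain ⟨z, rfl⟩ := Ext.covariant_sequence_exact₁ N hS x (hf _ hi x) rfl
    rw [Subsingleton.elim z 0, Ext.zero_comp]

lemma ExtVanishesBelow.left_of_shortExact {S : ShortComplex C} (hS : S.ShortExact) {N : C} {d : ℕ}
    (h₂ : ExtVanishesBelow N S.X₂ (d + 1)) (h₃ : ExtVanishesBelow N S.X₃ d) :
    ExtVanishesBelow N S.X₁ (d + 1) :=
  .left_of_comp_eq_zero hS (fun i hi _ => (h₂ i hi).elim _ _) h₃

lemma ExtVanishesBelow.right_of_shortExact {S : ShortComplex C} (hS : S.ShortExact) {N : C} {d : ℕ}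
    (h₁ : ExtVanishesBelow N S.X₁ (d + 1)) (h₂ : ExtVanishesBelow N S.X₂ d) :
    ExtVanishesBelow N S.X₃ d := by
  intro i hi
  have := h₁ (i + 1) (by omega)
  have := h₂ i hi
  refine subsingleton_of_forall_eq 0 fun x => ?_
  obtain ⟨z, rfl⟩ := Ext.covariant_sequence_exact₃ N hS x rfl (Subsingleton.elim _ _)
  rw [Subsingleton.elim z 0, Ext.zero_comp]

end ExtVanishing

section QuotientDepth

open CategoryTheory Abelian

variable {T : Type u} [CommRing T] {I J : Ideal T} {a b : T}

/-- The short exact sequence `0 → T ⧸ (J : a) → T ⧸ J → T ⧸ (J + (a)) → 0`, whose first map is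
multiplication by `a`. The colon ideal is an arbitrary `I` with `f ∈ I ↔ a * f ∈ J`, so that
`I = J` is allowed when `a` is regular modulo `J`. -/
noncomputable def colonShortComplex (hI : ∀ f, f ∈ I ↔ a * f ∈ J) :
    ShortComplex (ModuleCat.{u} T) :=
  ModuleCat.shortComplexOfCompEqZero
    (Submodule.mapQ I J (LinearMap.lsmul T T a) fun f hf => (hI f).1 hf)
    (Submodule.factor (le_sup_left : J ≤ J ⊔ Ideal.span {a})) <| by
      refine Submodule.linearMap_qext _ (LinearMap.ext fun f => ?_)
      exact (Submodule.Quotient.mk_eq_zero _).2 <| Submodule.mem_sup_right <|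
        Ideal.mul_mem_right f _ (Ideal.mem_span_singleton_self a)

lemma colonShortComplex_shortExact (hI : ∀ f, f ∈ I ↔ a * f ∈ J) :
    (colonShortComplex hI).ShortExact where
  exact := by
    refine ModuleCat.shortComplex_exact _ fun m => ⟨fun hm => ?_, ?_⟩
    · obtain ⟨f, rfl⟩ := Submodule.Quotient.mk_surjective _ m
      obtain ⟨j, hj, c, hc, rfl⟩ := Submodule.mem_sup.1 ((Submodule.Quotient.mk_eq_zero _).1 hm)
      obtain ⟨c, rfl⟩ := Ideal.mem_span_singleton.1 hc
      exact ⟨Submodule.Quotient.mk c, ((Submodule.Quotient.eq _).2 (by simpa using hj)).symm⟩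
    · rintro ⟨m, rfl⟩
      exact congr($((colonShortComplex hI).zero) m)
  mono_f := by
    refine (ModuleCat.mono_iff_injective _).2 ((injective_iff_map_eq_zero _).2 fun m hm => ?_)
    obtain ⟨f, rfl⟩ := Submodule.Quotient.mk_surjective _ m
    exact (Submodule.Quotient.mk_eq_zero _).2 ((hI f).2 ((Submodule.Quotient.mk_eq_zero _).1 hm))
  epi_g := (ModuleCat.epi_iff_surjective _).2 (Submodule.factor_surjective le_sup_left)

/-- A lower bound for the depth of `T ⧸ J` with respect to the ideal `𝔪`, in terms of `Ext`. -/
def DepthAtLeast (𝔪 J : Ideal T) (d : ℕ) : Prop :=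
  ExtVanishesBelow (ModuleCat.of T (T ⧸ 𝔪)) (ModuleCat.of T (T ⧸ J)) d

variable {𝔪 : Ideal T} {d : ℕ}

/- `T ⧸ (J : a)` and `T ⧸ (J : b)` are the same module, so the depth bound travels from
`J + (a)` to `J : a` and from there to `J + (b)`. -/
lemma DepthAtLeast.sup_span_of_colon_eq (hab : ∀ f, a * f ∈ J ↔ b * f ∈ J)
    (hJ : DepthAtLeast 𝔪 J (d + 1)) (ha : DepthAtLeast 𝔪 (J ⊔ Ideal.span {a}) d) :
    DepthAtLeast 𝔪 (J ⊔ Ideal.span {b}) d := by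
  have mem_colon (f : T) : f ∈ J.colon {a} ↔ a * f ∈ J := by
    rw [Submodule.mem_colon_singleton, smul_eq_mul, mul_comm]
  have hcolon : DepthAtLeast 𝔪 (J.colon {a}) (d + 1) :=
    .left_of_shortExact (colonShortComplex_shortExact mem_colon) hJ ha
  exact .right_of_shortExact
    (colonShortComplex_shortExact fun f => (mem_colon f).trans (hab f)) hcolon (hJ.mono d.le_succ)

lemma DepthAtLeast.of_sup_span (ha : a ∈ 𝔪) (hreg : ∀ f, a * f ∈ J → f ∈ J)
    (h : DepthAtLeast 𝔪 (J ⊔ Ideal.span {a}) d) : DepthAtLeast 𝔪 J (d + 1) := by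
  have hS := colonShortComplex_shortExact fun f => ⟨J.mul_mem_left a, hreg f⟩
  set S := colonShortComplex fun f => ⟨J.mul_mem_left a, hreg f⟩
  have f_eq_smul : S.f = a • 𝟙 (ModuleCat.of T (T ⧸ J)) := by
    ext m
    obtain ⟨f, rfl⟩ := Submodule.Quotient.mk_surjective _ m
    rfl
  have ha' : a ∈ Module.annihilator T (T ⧸ 𝔪) := by rwa [Ideal.annihilator_quotient]
  refine .left_of_comp_eq_zero hS (fun i _ x => ?_) h
  rw [f_eq_smul]
  exact congr($(Ext.postcomp_smul_id_eq_zero_of_mem_annihilator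
    (M := ModuleCat.of T (T ⧸ J)) (N := ModuleCat.of T (T ⧸ 𝔪)) ha' i) x)

lemma DepthAtLeast.exists_isRegular [IsNoetherianRing T] (h𝔪 : 𝔪 ≠ ⊤) (hJ : J ≤ 𝔪)
    (h : DepthAtLeast 𝔪 J d) : ∃ rs : List T, rs.length = d ∧ (∀ r ∈ rs, r ∈ 𝔪) ∧
      RingTheory.Sequence.IsRegular (T ⧸ J) rs := by
  refine ModuleCat.exists_isRegular_of_exists_subsingleton_ext 𝔪 d (ModuleCat.of T (T ⧸ J))
    (lt_top_iff_ne_top.2 ?_) (ModuleCat.of T (T ⧸ 𝔪)) ?_ h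
  · rintro (htop : 𝔪 • (⊤ : Submodule T (T ⧸ J)) = ⊤)
    refine h𝔪 (top_le_iff.1 ?_)
    rw [← Submodule.comap_top J.mkQ, ← htop,
      Submodule.comap_smul_top_of_surjective 𝔪 _ (Submodule.mkQ_surjective _)]
    simpa using hJ
  · change Module.support T (T ⧸ 𝔪) = _
    rw [Module.support_eq_zeroLocus, Ideal.annihilator_quotient]

end QuotientDepth

section OneVariable

open scoped Polynomial

variable {A : Type*} [CommRing A] {s l : A}

lemma coeff_succ_C_sub_C_mul_X_mul (F : A[X]) (i : ℕ) :
    ((Polynomial.C s - Polynomial.C l * Polynomial.X) * F).coeff (i + 1) =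
      s * F.coeff (i + 1) - l * F.coeff i := by
  rw [sub_mul, Polynomial.coeff_sub, Polynomial.coeff_C_mul, mul_assoc, Polynomial.coeff_C_mul,
    Polynomial.coeff_X_mul]

/- The coefficients of `F` are treated from the top down: once `l` kills the `(i + 1)`-st one, so
does `s`, and the `(i + 1)`-st coefficient of the product is `-l` times the `i`-th one of `F`. -/
lemma mul_coeff_eq_zero_of_natDegree_le (hl : ∀ a, l * a = 0 → s * a = 0) {F : A[X]} {d : ℕ}
    (hF : ((Polynomial.C s - Polynomial.C l * Polynomial.X) * F).natDegree ≤ d) {i : ℕ}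
    (hi : d ≤ i) : l * F.coeff i = 0 := by
  suffices ∀ m i, d ≤ i → F.natDegree < i + m → l * F.coeff i = 0 from
    this (F.natDegree + 1) i hi (by omega)
  intro m
  induction m with
  | zero =>
    intro i _ hi
    rw [Polynomial.coeff_eq_zero_of_natDegree_lt (by omega), mul_zero]
  | succ m ih =>
    intro i hdi hi
    have hs : s * F.coeff (i + 1) = 0 := hl _ (ih (i + 1) (by omega) (by omega))
    have hcoeff := Polynomial.coeff_eq_zero_of_natDegree_lt (hF.trans_lt (Nat.lt_succ_of_le hdi))
    rwa [coeff_succ_C_sub_C_mul_X_mul, hs, zero_sub, neg_eq_zero] at hcoeff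

lemma C_mul_eq_zero_iff_C_sub_C_mul_X_mul_eq_zero (hl : ∀ a, l * a = 0 → s * a = 0) (F : A[X]) :
    Polynomial.C l * F = 0 ↔ (Polynomial.C s - Polynomial.C l * Polynomial.X) * F = 0 := by
  constructor
  · intro h
    have hs : Polynomial.C s * F = 0 := by
      simp only [Polynomial.ext_iff, Polynomial.coeff_C_mul, Polynomial.coeff_zero] at h ⊢
      exact fun i => hl _ (h i)
    rw [sub_mul, hs, mul_right_comm, h, zero_mul, sub_zero]
  · intro h
    ext i
    rw [Polynomial.coeff_C_mul, Polynomial.coeff_zero]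
    exact mul_coeff_eq_zero_of_natDegree_le hl (by rw [h, Polynomial.natDegree_zero]) i.zero_le

lemma exists_natDegree_le_and_dvd_C_mul_sub {F : A[X]} {d : ℕ} (hd : F.natDegree = d + 1)
    (h : l ∣ s * F.coeff (d + 1)) :
    ∃ G : A[X], G.natDegree ≤ d ∧ Polynomial.C s - Polynomial.C l * Polynomial.X ∣
      Polynomial.C s * F - Polynomial.C s * G := by
  obtain ⟨v, hv⟩ := h
  refine ⟨F.eraseLead + Polynomial.C v * Polynomial.X ^ d, ?_,
    -Polynomial.C v * Polynomial.X ^ d, ?_⟩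
  · refine Polynomial.natDegree_add_le_of_degree_le ?_ (Polynomial.natDegree_C_mul_X_pow_le v d)
    simpa [hd] using F.eraseLead_natDegree_le
  · have hlead : F.eraseLead + Polynomial.C (F.coeff (d + 1)) * Polynomial.X ^ (d + 1) = F := by
      rw [← hd]
      exact F.eraseLead_add_C_mul_X_pow
    have hv' : Polynomial.C s * Polynomial.C (F.coeff (d + 1)) =
        Polynomial.C l * Polynomial.C v := by
      rw [← Polynomial.C_mul, hv, Polynomial.C_mul]
    linear_combination Polynomial.X ^ (d + 1) * hv' - Polynomial.C s * hlead

/- Modulo `C s - C l * X`, the leading term of `C s * F` is a multiple of `C l * X ^ (d + 1)`, so it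
can be traded for a term of lower degree. -/
lemma C_sub_C_mul_X_dvd_C_mul_of_dvd (hl : ∀ a, l * a = 0 → s * a = 0) {r : A}
    (hr : ∀ a, s * (r * a) = 0 → s * a = 0) (hlr : ∀ a, l ∣ s * (r * a) → l ∣ s * a) {F : A[X]}
    (h : Polynomial.C s - Polynomial.C l * Polynomial.X ∣ Polynomial.C (s * r) * F) :
    Polynomial.C s - Polynomial.C l * Polynomial.X ∣ Polynomial.C s * F := by
  induction hd : F.natDegree using Nat.strong_induction_on generalizing F with | _ d ih =>
  obtain ⟨B, hB⟩ := h
  have hlB : l * B.coeff d = 0 := mul_coeff_eq_zero_of_natDegree_le hl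
    (by rw [← hB]; exact (Polynomial.natDegree_C_mul_le _ _).trans hd.le) le_rfl
  cases d with
  | zero =>
    have h0 : s * (r * F.coeff 0) = 0 := by
      rw [← mul_assoc, ← Polynomial.coeff_C_mul, hB, Polynomial.mul_coeff_zero]
      simpa using hl _ hlB
    rw [Polynomial.eq_C_of_natDegree_eq_zero hd, ← Polynomial.C_mul, hr _ h0, Polynomial.C_0]
    exact dvd_zero _
  | succ d =>
    have hdvd : l ∣ s * (r * F.coeff (d + 1)) := by
      rw [← mul_assoc, ← Polynomial.coeff_C_mul, hB, coeff_succ_C_sub_C_mul_X_mul, hl _ hlB,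
        zero_sub]
      exact (dvd_mul_right _ _).neg_right
    obtain ⟨G, hG, hFG⟩ := exists_natDegree_le_and_dvd_C_mul_sub hd (hlr _ hdvd)
    refine (dvd_iff_dvd_of_dvd_sub hFG).2 (ih _ (Nat.lt_succ_of_le hG) ?_ rfl)
    refine (dvd_iff_dvd_of_dvd_sub ?_).1 (Dvd.intro B hB.symm)
    rw [mul_comm s, Polynomial.C_mul, mul_assoc, mul_assoc, ← mul_sub]
    exact hFG.mul_left _

end OneVariable

section AssociatedPrimes

open scoped Pointwise

variable {T : Type u} [CommRing T]

lemma quotSMulTop_map_subtype_injective {M : Type v} [AddCommGroup M] [Module T M] {a : T}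
    (ha : IsSMulRegular M a) (s : Set T) :
    Function.Injective (QuotSMulTop.map a (Submodule.torsionBySet T M s).subtype) := by
  refine (injective_iff_map_eq_zero _).2 fun n hn => ?_
  obtain ⟨⟨n, hns⟩, rfl⟩ := Submodule.Quotient.mk_surjective _ n
  obtain ⟨m, -, hm : a • m = n⟩ := (Submodule.Quotient.mk_eq_zero _).1 hn
  refine (Submodule.Quotient.mk_eq_zero _).2 ⟨⟨m, ?_⟩, trivial, Subtype.ext hm⟩
  rw [Submodule.mem_torsionBySet_iff] at hns ⊢
  exact fun p => ha (by simpa [← hm, smul_comm a] using hns p)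

/- The elements of `M` killed by `P` form a submodule `N` which is supported at `𝔪`; regularity of
`a` embeds `N ⧸ aN` into `M ⧸ aM`. -/
lemma exists_lt_mem_associatedPrimes_quotSMulTop [IsNoetherianRing T] {M : Type v}
    [AddCommGroup M] [Module T M] [Module.Finite T M] {P 𝔪 : Ideal T} [h𝔪 : 𝔪.IsPrime]
    (hP : P ∈ associatedPrimes T M) (hP𝔪 : P ≤ 𝔪) {a : T} (ha : a ∈ 𝔪) (hreg : IsSMulRegular M a) :
    ∃ q ∈ associatedPrimes T (QuotSMulTop a M), P < q ∧ q ≤ 𝔪 := by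
  obtain ⟨-, z, rfl⟩ := isAssociatedPrime_iff.1 hP
  set P := Submodule.colon (⊥ : Submodule T M) {z}
  let N := Submodule.torsionBySet T M (P : Set T)
  have hzN : z ∈ N := (Submodule.mem_torsionBySet_iff _ _).2 fun p => by
    simpa using Submodule.mem_colon_singleton.1 p.2
  have annihilator_le : Module.annihilator T N ≤ P := fun t ht =>
    Submodule.mem_colon_singleton.2 <| (Submodule.mem_bot T).2 <|
      congrArg Subtype.val (Module.mem_annihilator.1 ht ⟨z, hzN⟩)
  have mem_support : (⟨𝔪, h𝔪⟩ : PrimeSpectrum T) ∈ Module.support T (QuotSMulTop a N) := by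
    rw [Module.support_quotSMulTop]
    exact ⟨Module.mem_support_iff_of_finite.2 (annihilator_le.trans hP𝔪), by simpa using ha⟩
  obtain ⟨q, hq, hq𝔪⟩ :=
    Ideal.exists_minimalPrimes_le (Module.mem_support_iff_of_finite.1 mem_support)
  have hP_le : P ≤ Module.annihilator T (QuotSMulTop a N) := fun p hp => by
    refine Module.mem_annihilator.2 fun n => ?_
    obtain ⟨n, rfl⟩ := Submodule.Quotient.mk_surjective _ n
    have hpn : p • n = 0 := Subtype.ext ((Submodule.mem_torsionBySet_iff _ _).1 n.2 ⟨p, hp⟩)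
    rw [← Submodule.Quotient.mk_smul, hpn, Submodule.Quotient.mk_zero]
  have haP : a ∉ P := fun haP => hP.isPrime.ne_top <| (Ideal.eq_top_iff_one _).2 <| by
    have hz : z = 0 := hreg (by simpa using Submodule.mem_colon_singleton.1 haP)
    simp [P, hz]
  refine ⟨q, associatedPrimes.subset_of_injective (quotSMulTop_map_subtype_injective hreg _)
    (Module.associatedPrimes.minimalPrimes_annihilator_subset_associatedPrimes T _ hq), ?_, hq𝔪⟩
  exact SetLike.lt_iff_le_and_exists.2
    ⟨hP_le.trans hq.1.2, a, hq.1.2 (QuotSMulTop.mem_annihilator N a), haP⟩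

end AssociatedPrimes

section TranscendenceDegree

lemma trdeg_lt_of_surjective {K : Type v} {S S' : Type u} [Field K] [CommRing S] [IsDomain S]
    [Algebra K S] [Algebra.FiniteType K S] [CommRing S'] [IsDomain S'] [Algebra K S']
    (f : S →ₐ[K] S') (hf : Function.Surjective f) (hf' : ¬ Function.Injective f) :
    Algebra.trdeg K S' < Algebra.trdeg K S := by
  refine (trdeg_le_of_surjective f hf).lt_of_ne fun h => ?_
  obtain ⟨ι, x, hx⟩ := exists_isTranscendenceBasis' K S'
  obtain ⟨y, rfl⟩ : ∃ y : ι → S, f ∘ y = x := ⟨_, funext fun i => Function.surjInv_eq hf (x i)⟩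
  have := Cardinal.lt_aleph0_iff_finite.1 <|
    (hx.cardinalMk_eq_trdeg.trans h).trans_lt trdeg_lt_aleph0_of_finiteType
  have hy := (hx.1.of_comp f).isTranscendenceBasis_of_trdeg_le_of_finite
    (hx.cardinalMk_eq_trdeg.trans h).ge
  obtain ⟨s, hs, hs0⟩ : ∃ s, f s = 0 ∧ s ≠ 0 := by
    simpa [injective_iff_map_eq_zero] using hf'
  obtain ⟨⟨r, hr⟩, hr0, hsr⟩ :=
    (hy.isAlgebraic.isAlgebraic s).exists_nonzero_dvd (mem_nonZeroDivisors_of_ne_zero hs0)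
  obtain ⟨p, rfl⟩ := Algebra.adjoin_range_eq_range_aeval K y ▸ hr
  have hp : aeval (f ∘ y) p = 0 := by
    rw [← zero_dvd_iff, ← hs, Function.comp_def, ← comp_aeval_apply]
    exact map_dvd f hsr
  exact hr0 (Subtype.ext (by simp [(map_eq_zero_iff _ hx.1).1 hp]))

lemma length_le_trdeg_of_mem_associatedPrimes {K : Type v} [Field K] {T : Type u} [CommRing T]
    [Algebra K T] [Algebra.FiniteType K T] {𝔪 : Ideal T} [𝔪.IsPrime]
    {rs : List T} (hrs : ∀ r ∈ rs, r ∈ 𝔪)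
    {M : Type w} [AddCommGroup M] [Module T M] [Module.Finite T M]
    (hreg : RingTheory.Sequence.IsWeaklyRegular M rs) {P : Ideal T}
    (hP : P ∈ associatedPrimes T M) (hP𝔪 : P ≤ 𝔪) :
    (rs.length : Cardinal) ≤ Algebra.trdeg K (T ⧸ P) := by
  have := Algebra.FiniteType.isNoetherianRing K T
  induction rs generalizing M P with
  | nil => simp
  | cons a rs ih =>
    obtain ⟨ha, hreg⟩ := (RingTheory.Sequence.isWeaklyRegular_cons_iff M a rs).1 hreg
    obtain ⟨ha𝔪, hrs⟩ := List.forall_mem_cons.1 hrs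
    obtain ⟨q, hq, hPq, hq𝔪⟩ := exists_lt_mem_associatedPrimes_quotSMulTop hP hP𝔪 ha𝔪 ha
    have := hP.isPrime
    have := hq.isPrime
    have hlt := trdeg_lt_of_surjective (Ideal.Quotient.factorₐ K hPq.le)
      (Ideal.Quotient.factor_surjective hPq.le) fun hinj => hPq.not_ge fun f hf => by
        rw [← Ideal.Quotient.eq_zero_iff_mem] at hf ⊢
        exact (map_eq_zero_iff _ hinj).1 hf
    rw [List.length_cons, Nat.cast_succ, ← Cardinal.succ_natCast, Order.succ_le_iff]
    exact (ih hrs hreg hq hq𝔪).trans_lt hlt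

lemma trdeg_le_cardinalMk_of_surjective {K : Type*} {τ : Type*} {D : Type*} [Field K]
    [CommRing D] [IsDomain D] [Algebra K D] (g : MvPolynomial τ K →ₐ[K] D)
    (hg : Function.Surjective g) (s : Set D)
    (h : ∀ i, ∃ a ∈ Algebra.adjoin K s, a ≠ 0 ∧ a * g (X i) ∈ Algebra.adjoin K s) :
    Algebra.trdeg K D ≤ Cardinal.mk s := by
  have : Algebra.IsAlgebraic (Algebra.adjoin K s) D := by
    refine ⟨fun z => ?_⟩
    obtain ⟨f, rfl⟩ := hg z
    rw [← Subalgebra.mem_algebraicClosure]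
    induction f using MvPolynomial.induction_on with
    | C r =>
      rw [← MvPolynomial.algebraMap_eq, AlgHom.commutes,
        IsScalarTower.algebraMap_apply K (Algebra.adjoin K s) D]
      exact algebraMap_mem _ _
    | add f g hf hg => rw [map_add]; exact add_mem hf hg
    | mul_X f i hf =>
      obtain ⟨a, ha, ha0, hai⟩ := h i
      rw [map_mul]
      refine mul_mem hf (IsAlgebraic.of_mul (R := Algebra.adjoin K s)
        (mem_nonZeroDivisors_of_ne_zero ha0) ?_ ?_)
      · exact isAlgebraic_algebraMap (⟨a, ha⟩ : Algebra.adjoin K s)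
      · exact isAlgebraic_algebraMap (⟨_, hai⟩ : Algebra.adjoin K s)
  exact Algebra.IsAlgebraic.trdeg_le_cardinalMk K s

end TranscendenceDegree

section LinearIdeal

variable {K : Type*} {E : Type*} {T : Type u} [Field K] [AddCommGroup E] [Module K E] [CommRing T]
  [Algebra K T] {L : E →ₗ[K] T}

/-- The ideal generated by the linear forms `L u`, `u ∈ U`. It is used when `L` exhibits `T` as the
symmetric algebra of `E`; then `linearIdeal L ⊤` is the irrelevant ideal. -/
def linearIdeal (L : E →ₗ[K] T) (U : Submodule K E) : Ideal T :=
  Ideal.span (L '' U)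

lemma map_mem_linearIdeal {U : Submodule K E} {v : E} (hv : v ∈ U) : L v ∈ linearIdeal L U :=
  Ideal.subset_span ⟨v, hv, rfl⟩

lemma linearIdeal_le {U : Submodule K E} {J : Ideal T} (h : ∀ v ∈ U, L v ∈ J) :
    linearIdeal L U ≤ J :=
  Ideal.span_le.2 (Set.image_subset_iff.2 h)

lemma linearIdeal_mono {U U' : Submodule K E} (h : U ≤ U') : linearIdeal L U ≤ linearIdeal L U' :=
  linearIdeal_le fun _ hv => map_mem_linearIdeal (h hv)

lemma linearIdeal_span (s : Set E) : linearIdeal L (Submodule.span K s) = Ideal.span (L '' s) := by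
  refine le_antisymm (linearIdeal_le fun v hv => ?_)
    (Ideal.span_mono (Set.image_mono Submodule.subset_span))
  refine (Submodule.span_le (p := ((Ideal.span (L '' s)).restrictScalars K).comap L)).2
    (fun u hu => ?_) hv
  exact Ideal.subset_span ⟨u, hu, rfl⟩

lemma linearIdeal_sup_span_singleton (U : Submodule K E) (v : E) :
    linearIdeal L (U ⊔ K ∙ v) = linearIdeal L U ⊔ Ideal.span {L v} := by
  refine le_antisymm (linearIdeal_le fun u hu => ?_) (sup_le (linearIdeal_mono le_sup_left) ?_)
  · obtain ⟨w, hw, _, hz, rfl⟩ := Submodule.mem_sup.1 hu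
    obtain ⟨c, rfl⟩ := Submodule.mem_span_singleton.1 hz
    rw [map_add, map_smul]
    exact add_mem (Ideal.mem_sup_left (map_mem_linearIdeal hw)) <|
      Submodule.smul_of_tower_mem _ c <| Ideal.mem_sup_right (Ideal.mem_span_singleton_self _)
  · rw [Ideal.span_singleton_le_iff_mem]
    exact map_mem_linearIdeal (Submodule.mem_sup_right (Submodule.mem_span_singleton_self v))

lemma finrank_sup_span_singleton_le (U : Submodule K E) [FiniteDimensional K U] (v : E) :
    Module.finrank K ↥(U ⊔ K ∙ v) ≤ Module.finrank K U + 1 :=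
  (Submodule.finrank_add_le_finrank_add_finrank U (K ∙ v)).trans <|
    Nat.add_le_add_left (by simpa using finrank_span_le_card (R := K) ({v} : Set E)) _

lemma isDomain_of_isSymmetricAlgebra (hL : IsSymmetricAlgebra L) : IsDomain T :=
  hL.equiv.symm.toMulEquiv.isDomain

lemma map_mem_linearIdeal_iff (hL : IsSymmetricAlgebra L) {U : Submodule K E} {v : E} :
    L v ∈ linearIdeal L U ↔ v ∈ U := by
  refine ⟨fun hv => ?_, map_mem_linearIdeal⟩
  by_contra hvU
  obtain ⟨c, hcv, hcU⟩ := Submodule.exists_le_ker_of_notMem hvU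
  have hker : linearIdeal L U ≤ RingHom.ker (hL.lift c) :=
    linearIdeal_le fun u hu => (hL.lift_eq c u).trans (hcU hu)
  exact hcv ((hL.lift_eq c v).symm.trans (hker hv))

/- The kernel of the endomorphism of `T` induced by a projection of `E` with kernel `U`. -/
lemma linearIdeal_isPrime (hL : IsSymmetricAlgebra L) (U : Submodule K E) :
    (linearIdeal L U).IsPrime := by
  have := isDomain_of_isSymmetricAlgebra hL
  obtain ⟨g, hg⟩ := U.mkQ.exists_rightInverse_of_surjective U.range_mkQ
  let φ : T →ₐ[K] T := hL.lift (L ∘ₗ g ∘ₗ U.mkQ)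
  have φ_sub_mem (f : T) : φ f - f ∈ linearIdeal L U := by
    induction f using hL.induction with
    | algebraMap r => simp
    | ι v =>
      rw [hL.lift_eq, LinearMap.comp_apply, ← map_sub]
      refine map_mem_linearIdeal ((Submodule.Quotient.eq U).1 ?_)
      exact LinearMap.congr_fun hg (U.mkQ v)
    | mul a b ha hb =>
      rw [map_mul, show φ a * φ b - a * b = φ a * (φ b - b) + b * (φ a - a) by ring]
      exact add_mem (Ideal.mul_mem_left _ _ hb) (Ideal.mul_mem_left _ _ ha)
    | add a b ha hb =>
      rw [map_add, add_sub_add_comm]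
      exact add_mem ha hb
  have hker : linearIdeal L U = RingHom.ker φ := by
    refine le_antisymm (linearIdeal_le fun u hu => ?_) fun f hf => ?_
    · simp [φ, RingHom.mem_ker, (Submodule.Quotient.mk_eq_zero U).2 hu]
    · simpa [RingHom.mem_ker.1 hf] using φ_sub_mem f
  exact hker ▸ RingHom.ker_isPrime φ

lemma ker_le_linearIdeal_top (hL : IsSymmetricAlgebra L) {A : Type*} [CommRing A] [Algebra K A]
    (φ : T →ₐ[K] A) (ε : A →ₐ[K] K) (h : ε.toLinearMap ∘ₗ φ.toLinearMap ∘ₗ L = 0) :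
    RingHom.ker φ ≤ linearIdeal L ⊤ := by
  have hmk : Ideal.Quotient.mkₐ K (linearIdeal L ⊤) = (Algebra.ofId K _).comp (ε.comp φ) := by
    refine hL.algHom_ext (LinearMap.ext fun v => ?_)
    have hv : ε (φ (L v)) = 0 := LinearMap.congr_fun h v
    have hmem : L v ∈ linearIdeal L ⊤ := map_mem_linearIdeal Submodule.mem_top
    simpa [hv] using Ideal.Quotient.eq_zero_iff_mem.2 hmem
  intro f hf
  have hf0 : φ f = 0 := hf
  rw [← Ideal.Quotient.eq_zero_iff_mem]
  simpa [hf0] using AlgHom.congr_fun hmk f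

lemma depthAtLeast_linearIdeal [FiniteDimensional K E] (hL : IsSymmetricAlgebra L)
    (U : Submodule K E) {d : ℕ} (hd : d + Module.finrank K U ≤ Module.finrank K E) :
    DepthAtLeast (linearIdeal L ⊤) (linearIdeal L U) d := by
  induction d generalizing U with
  | zero => exact fun i hi => absurd hi i.not_lt_zero
  | succ d ih =>
    have hU : U ≠ ⊤ := by
      rintro rfl
      rw [finrank_top] at hd
      omega
    obtain ⟨v, -, hv⟩ := SetLike.exists_of_lt hU.lt_top
    refine .of_sup_span (map_mem_linearIdeal (Submodule.mem_top (x := v))) (fun f hf => ?_) ?_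
    · exact ((linearIdeal_isPrime hL U).mem_or_mem hf).resolve_left
        (hv ∘ (map_mem_linearIdeal_iff hL).1)
    · rw [← linearIdeal_sup_span_singleton]
      exact ih _ (by rw [Submodule.finrank_sup_span_singleton hv]; omega)

end LinearIdeal

section Expansion

open scoped Polynomial

variable {K : Type*} {E : Type*} {T : Type u} [Field K] [AddCommGroup E] [Module K E] [CommRing T]
  [Algebra K T] {L : E →ₗ[K] T}

/-- The expansion of an element of `T`, taken modulo `J`, as a polynomial in `y`, where `c` is the
`y`-coordinate functional. Only the coefficients are reduced modulo `J`, and they are still allowed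
to involve `y`; the expansion is compatible with reduction modulo `J` by `eval_expandAlong`. -/
noncomputable def expandAlong (hL : IsSymmetricAlgebra L) (c : Module.Dual K E) (y : E)
    (J : Ideal T) : T →ₐ[K] (T ⧸ J)[X] :=
  hL.lift <| (Polynomial.CAlgHom.comp (Ideal.Quotient.mkₐ K J)).toLinearMap ∘ₗ L ∘ₗ
    (LinearMap.id - c.smulRight y) + c.smulRight Polynomial.X

variable (hL : IsSymmetricAlgebra L) {c : Module.Dual K E} {y : E} {J : Ideal T}

lemma expandAlong_map (v : E) : expandAlong hL c y J (L v) =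
    Polynomial.C (Ideal.Quotient.mk J (L (v - c v • y))) + c v • Polynomial.X := by
  simp [expandAlong]

lemma expandAlong_self (hcy : c y = 1) : expandAlong hL c y J (L y) = Polynomial.X := by
  simp [expandAlong_map, hcy]

lemma expandAlong_of_mem_adjoin {f : T} (hf : f ∈ Algebra.adjoin K (L '' LinearMap.ker c)) :
    expandAlong hL c y J f = Polynomial.C (Ideal.Quotient.mk J f) := by
  refine AlgHom.adjoin_le_equalizer (expandAlong hL c y J)
    (Polynomial.CAlgHom.comp (Ideal.Quotient.mkₐ K J)) ?_ hf
  rintro _ ⟨v, hv, rfl⟩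
  simp [expandAlong_map, LinearMap.mem_ker.1 hv]

lemma eval_expandAlong (f : T) :
    (expandAlong hL c y J f).eval (Ideal.Quotient.mk J (L y)) = Ideal.Quotient.mk J f := by
  suffices ((Polynomial.aeval (Ideal.Quotient.mk J (L y))).restrictScalars K).comp
      (expandAlong hL c y J) = Ideal.Quotient.mkₐ K J by
    simpa [Polynomial.coe_aeval_eq_eval] using DFunLike.congr_fun this f
  refine hL.algHom_ext (LinearMap.ext fun v => ?_)
  have mk_smul : Ideal.Quotient.mk J (c v • L y) = c v • Ideal.Quotient.mk J (L y) := rfl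
  simp [expandAlong_map, mk_smul]

lemma expandAlong_eq_zero_iff (hJ : J ≤ RingHom.ker (expandAlong hL c y J)) {f : T} :
    expandAlong hL c y J f = 0 ↔ f ∈ J := by
  refine ⟨fun hf => ?_, fun hf => hJ hf⟩
  rw [← Ideal.Quotient.eq_zero_iff_mem, ← eval_expandAlong hL, hf, Polynomial.eval_zero]

variable {s l : T} (hs : s ∈ Algebra.adjoin K (L '' LinearMap.ker c))
  (hl : l ∈ Algebra.adjoin K (L '' LinearMap.ker c))

include hs hl

lemma expandAlong_sub_mul (hcy : c y = 1) : expandAlong hL c y J (s - l * L y) =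
    Polynomial.C (Ideal.Quotient.mk J s) - Polynomial.C (Ideal.Quotient.mk J l) * Polynomial.X := by
  rw [map_sub, map_mul, expandAlong_self hL hcy, expandAlong_of_mem_adjoin hL hs,
    expandAlong_of_mem_adjoin hL hl]

lemma mem_sup_span_iff_dvd_expandAlong (hcy : c y = 1)
    (hJ : J ≤ RingHom.ker (expandAlong hL c y J)) {f : T} :
    f ∈ J ⊔ Ideal.span {s - l * L y} ↔ Polynomial.C (Ideal.Quotient.mk J s) -
      Polynomial.C (Ideal.Quotient.mk J l) * Polynomial.X ∣ expandAlong hL c y J f := by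
  rw [← expandAlong_sub_mul hL hs hl hcy]
  constructor
  · intro hf
    obtain ⟨j, hj, g, hg, rfl⟩ := Submodule.mem_sup.1 hf
    rw [map_add, (expandAlong_eq_zero_iff hL hJ).2 hj, zero_add]
    exact map_dvd _ (Ideal.mem_span_singleton.1 hg)
  · rintro ⟨G, hG⟩
    obtain ⟨g, hg⟩ := Ideal.Quotient.mk_surjective (G.eval (Ideal.Quotient.mk J (L y)))
    have hmk := congrArg (Polynomial.eval (Ideal.Quotient.mk J (L y))) hG
    rw [Polynomial.eval_mul, eval_expandAlong, eval_expandAlong, ← hg, ← map_mul,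
      Ideal.Quotient.mk_eq_mk_iff_sub_mem] at hmk
    rw [← sub_add_cancel f ((s - l * L y) * g)]
    exact add_mem (Ideal.mem_sup_left hmk) <|
      Ideal.mem_sup_right <| Ideal.mul_mem_right _ _ (Ideal.mem_span_singleton_self _)

lemma mul_mem_iff_sub_mul_mul_mem (hcy : c y = 1) (hJ : J ≤ RingHom.ker (expandAlong hL c y J))
    (hls : ∀ f, l * f ∈ J → s * f ∈ J) (f : T) : l * f ∈ J ↔ (s - l * L y) * f ∈ J := by
  rw [← expandAlong_eq_zero_iff hL hJ, ← expandAlong_eq_zero_iff hL hJ, map_mul, map_mul,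
    expandAlong_sub_mul hL hs hl hcy, expandAlong_of_mem_adjoin hL hl]
  refine C_mul_eq_zero_iff_C_sub_C_mul_X_mul_eq_zero (fun a ha => ?_) _
  obtain ⟨a, rfl⟩ := Ideal.Quotient.mk_surjective a
  rw [← map_mul, Ideal.Quotient.eq_zero_iff_mem] at ha ⊢
  exact hls a ha

end Expansion

section RegularOnMultiples

variable {T : Type u} [CommRing T] {s l r : T} {J : Ideal T}

/-- Multiplication by `r` is injective on the multiples `s • (T ⧸ J)` of `s` modulo `J`. -/
def RegularOnMultiples (s r : T) (J : Ideal T) : Prop :=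
  ∀ f, s * (r * f) ∈ J → s * f ∈ J

lemma RegularOnMultiples.of_mem (hs : s ∈ J) : RegularOnMultiples s r J :=
  fun f _ => J.mul_mem_right f hs

lemma RegularOnMultiples.of_isPrime [J.IsPrime] (hr : r ∈ J → s ∈ J) :
    RegularOnMultiples s r J := by
  intro f hf
  rcases Ideal.IsPrime.mem_or_mem ‹_› hf with hs | hrf
  · exact J.mul_mem_right f hs
  · rcases Ideal.IsPrime.mem_or_mem ‹_› hrf with hr' | hf
    · exact J.mul_mem_right f (hr hr')
    · exact J.mul_mem_left s hf

variable {K : Type*} {E : Type*} [Field K] [AddCommGroup E] [Module K E] [Algebra K T]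
  {L : E →ₗ[K] T}

lemma RegularOnMultiples.sup_span_sub_mul (hL : IsSymmetricAlgebra L) {c : Module.Dual K E} {y : E}
    (hcy : c y = 1) (hJ : J ≤ RingHom.ker (expandAlong hL c y J))
    (hs : s ∈ Algebra.adjoin K (L '' LinearMap.ker c))
    (hl : l ∈ Algebra.adjoin K (L '' LinearMap.ker c))
    (hr : r ∈ Algebra.adjoin K (L '' LinearMap.ker c))
    (hsl : RegularOnMultiples s l J) (hsr : RegularOnMultiples s r J)
    (hlr : RegularOnMultiples s r (J ⊔ Ideal.span {l})) :
    RegularOnMultiples s r (J ⊔ Ideal.span {s - l * L y}) := by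
  intro f hf
  rw [mem_sup_span_iff_dvd_expandAlong hL hs hl hcy hJ, map_mul,
    expandAlong_of_mem_adjoin hL hs] at hf ⊢
  have mk_dvd_iff (g : T) : Ideal.Quotient.mk J l ∣ Ideal.Quotient.mk J g ↔
      g ∈ J ⊔ Ideal.span {l} := by
    rw [sup_comm, ← Ideal.mem_quotient_iff_mem_sup, Ideal.map_span, Set.image_singleton,
      Ideal.mem_span_singleton]
  rw [map_mul, expandAlong_of_mem_adjoin hL hr, ← mul_assoc, ← Polynomial.C_mul] at hf
  refine C_sub_C_mul_X_dvd_C_mul_of_dvd (fun a ha => ?_) (fun a ha => ?_) (fun a ha => ?_) hf <;>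
    obtain ⟨a, rfl⟩ := Ideal.Quotient.mk_surjective a
  · rw [← map_mul, Ideal.Quotient.eq_zero_iff_mem] at ha ⊢
    exact hsl a (J.mul_mem_left s ha)
  · rw [← map_mul, ← map_mul, Ideal.Quotient.eq_zero_iff_mem] at ha
    rw [← map_mul, Ideal.Quotient.eq_zero_iff_mem]
    exact hsr a ha
  · rw [← map_mul, ← map_mul, mk_dvd_iff] at ha
    rw [← map_mul, mk_dvd_iff]
    exact hlr a ha

end RegularOnMultiples

section LinkIdeal

variable {K : Type*} {E : Type*} {T : Type u} {ι : Type*} [Field K] [AddCommGroup E] [Module K E]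
  [CommRing T] [Algebra K T] {L : E →ₗ[K] T} {ℓ y : ι → E} {c : ι → Module.Dual K E} {s : T}
  {W : Submodule K E} {S : Finset ι} {j o : ι}

/-- The ideal generated by the linear forms in `W` and the relations `ℓ j * y j = s` for `j ∈ S`.
With `s = ℓ o * y o` and `W = ⊥` these are the relations between the products of all but one of
the `ℓ j`. -/
def linkIdeal (L : E →ₗ[K] T) (ℓ y : ι → E) (s : T) (W : Submodule K E) (S : Finset ι) : Ideal T :=
  linearIdeal L W ⊔ Ideal.span ((fun j => s - L (ℓ j) * L (y j)) '' S)

lemma map_mem_linkIdeal {v : E} (hv : v ∈ W) : L v ∈ linkIdeal L ℓ y s W S :=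
  Ideal.mem_sup_left (map_mem_linearIdeal hv)

lemma sub_mem_linkIdeal (hj : j ∈ S) : s - L (ℓ j) * L (y j) ∈ linkIdeal L ℓ y s W S :=
  Ideal.mem_sup_right (Ideal.subset_span ⟨j, hj, rfl⟩)

lemma linkIdeal_le {I : Ideal T} (hW : ∀ v ∈ W, L v ∈ I)
    (hS : ∀ j ∈ S, s - L (ℓ j) * L (y j) ∈ I) : linkIdeal L ℓ y s W S ≤ I :=
  sup_le (linearIdeal_le hW) (Ideal.span_le.2 (Set.image_subset_iff.2 hS))

lemma linkIdeal_empty : linkIdeal L ℓ y s W ∅ = linearIdeal L W := by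
  simp [linkIdeal]

lemma linkIdeal_insert [DecidableEq ι] : linkIdeal L ℓ y s W (insert j S) =
    linkIdeal L ℓ y s W S ⊔ Ideal.span {s - L (ℓ j) * L (y j)} := by
  rw [linkIdeal, linkIdeal, Finset.coe_insert, Set.image_insert_eq, Ideal.span_insert, sup_assoc,
    sup_comm (Ideal.span {_})]

lemma linkIdeal_sup_span_map (v : E) : linkIdeal L ℓ y s (W ⊔ K ∙ v) S =
    linkIdeal L ℓ y s W S ⊔ Ideal.span {L v} := by
  rw [linkIdeal, linkIdeal, linearIdeal_sup_span_singleton, sup_right_comm]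

lemma self_mem_linkIdeal (hj : j ∈ S) (hjW : ℓ j ∈ W) : s ∈ linkIdeal L ℓ y s W S := by
  have hmul : L (ℓ j) * L (y j) ∈ linkIdeal L ℓ y s W S :=
    Ideal.mul_mem_right _ _ (map_mem_linkIdeal hjW)
  exact (Submodule.sub_mem_iff_left _ hmul).1 (sub_mem_linkIdeal hj)

lemma linkIdeal_insert_eq_linkIdeal_zero [DecidableEq ι] (hs : s = L (ℓ o) * L (y o))
    (hjW : ℓ j ∈ W) :
    linkIdeal L ℓ y s W (insert j S) = linkIdeal L ℓ y 0 W (insert o S) := by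
  have hs_mem : s ∈ linkIdeal L ℓ y s W (insert j S) :=
    self_mem_linkIdeal (Finset.mem_insert_self j S) hjW
  have zero_sub_mem {i : ι} (hi : i ∈ insert o S) :
      0 - L (ℓ i) * L (y i) ∈ linkIdeal L ℓ y 0 W (insert o S) := sub_mem_linkIdeal hi
  simp only [zero_sub, neg_mem_iff] at zero_sub_mem
  refine le_antisymm (linkIdeal_le (fun _ => map_mem_linkIdeal) fun i hi => ?_)
    (linkIdeal_le (fun _ => map_mem_linkIdeal) fun i hi => ?_)
  · refine sub_mem (hs ▸ zero_sub_mem (Finset.mem_insert_self o S)) ?_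
    rcases Finset.mem_insert.1 hi with rfl | hi
    · exact Ideal.mul_mem_right _ _ (map_mem_linkIdeal hjW)
    · exact zero_sub_mem (Finset.mem_insert_of_mem hi)
  · rw [zero_sub, neg_mem_iff]
    rcases Finset.mem_insert.1 hi with rfl | hi
    · rwa [← hs]
    · exact (Submodule.sub_mem_iff_right _ hs_mem).1
        (sub_mem_linkIdeal (Finset.mem_insert_of_mem hi))

/- If `v = w + a • ℓ j`, then `L v * L (y j)` is congruent to `a • s`. -/
lemma regularOnMultiples_of_mem_sup {v : E} (hj : j ∈ S) (hvW : v ∉ W) (hv : v ∈ W ⊔ K ∙ ℓ j)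
    (hs : RegularOnMultiples s s (linkIdeal L ℓ y s W S)) :
    RegularOnMultiples s (L v) (linkIdeal L ℓ y s W S) := by
  intro f hf
  obtain ⟨w, hw, _, hz, rfl⟩ := Submodule.mem_sup.1 hv
  obtain ⟨a, rfl⟩ := Submodule.mem_span_singleton.1 hz
  have ha : a ≠ 0 := by
    rintro rfl
    exact hvW (by simpa using hw)
  refine hs f ?_
  have hinv : algebraMap K T a⁻¹ * algebraMap K T a = 1 := by
    rw [← map_mul, inv_mul_cancel₀ ha, map_one]
  have key : s * (s * f) = s * f * (s - L (ℓ j) * L (y j)) +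
      algebraMap K T a⁻¹ * L (y j) * (s * (L (w + a • ℓ j) * f)) -
      algebraMap K T a⁻¹ * L (y j) * s * f * L w := by
    rw [map_add, map_smul, Algebra.smul_def]
    linear_combination -s * f * L (ℓ j) * L (y j) * hinv
  rw [key]
  refine sub_mem (add_mem (Ideal.mul_mem_left _ _ (sub_mem_linkIdeal hj))
    (Ideal.mul_mem_left _ _ hf)) (Ideal.mul_mem_left _ _ (map_mem_linkIdeal hw))

/-- The functional `c j` is a coordinate along `y j`, and the `ℓ j` involve none of the `y i`. -/
structure IsLinkFrame (ℓ y : ι → E) (c : ι → Module.Dual K E) : Prop where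
  coord_self (j : ι) : c j (y j) = 1
  coord_ne {i j : ι} (hij : i ≠ j) : c i (y j) = 0
  coord_form (i j : ι) : c i (ℓ j) = 0

lemma map_mem_adjoin {v : E} (hv : v ∈ ⨅ i, LinearMap.ker (c i)) (j : ι) :
    L v ∈ Algebra.adjoin K (L '' LinearMap.ker (c j)) :=
  Algebra.subset_adjoin ⟨v, Submodule.mem_iInf _ |>.1 hv j, rfl⟩

namespace IsLinkFrame

variable (hF : IsLinkFrame ℓ y c)

include hF

lemma form_mem (j : ι) : ℓ j ∈ ⨅ i, LinearMap.ker (c i) :=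
  Submodule.mem_iInf _ |>.2 fun i => hF.coord_form i j

lemma sup_span_form_le (hW : W ≤ ⨅ i, LinearMap.ker (c i)) (j : ι) :
    W ⊔ K ∙ ℓ j ≤ ⨅ i, LinearMap.ker (c i) :=
  sup_le hW ((Submodule.span_singleton_le_iff_mem _ _).2 (hF.form_mem j))

lemma mul_mem_adjoin (hjo : j ≠ o) :
    L (ℓ o) * L (y o) ∈ Algebra.adjoin K (L '' LinearMap.ker (c j)) :=
  mul_mem (map_mem_adjoin (hF.form_mem o) j)
    (Algebra.subset_adjoin ⟨y o, hF.coord_ne hjo, rfl⟩)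

lemma linkIdeal_le_ker_expandAlong (hL : IsSymmetricAlgebra L)
    (hW : W ≤ ⨅ i, LinearMap.ker (c i)) (hj : j ∉ S)
    (hs : s ∈ Algebra.adjoin K (L '' LinearMap.ker (c j))) :
    linkIdeal L ℓ y s W S ≤
      RingHom.ker (expandAlong hL (c j) (y j) (linkIdeal L ℓ y s W S)) := by
  refine linkIdeal_le (fun v hv => ?_) (fun i hi => ?_)
  · rw [RingHom.mem_ker, expandAlong_of_mem_adjoin hL (map_mem_adjoin (hW hv) j),
      Ideal.Quotient.eq_zero_iff_mem.2 (map_mem_linkIdeal hv), Polynomial.C_0]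
  · rw [RingHom.mem_ker, expandAlong_of_mem_adjoin hL
        (sub_mem hs (hF.mul_mem_adjoin (ne_of_mem_of_not_mem hi hj).symm)),
      Ideal.Quotient.eq_zero_iff_mem.2 (sub_mem_linkIdeal hi), Polynomial.C_0]

lemma regularOnMultiples_linkIdeal (hL : IsSymmetricAlgebra L)
    (hs : ∀ j ∈ S, s ∈ Algebra.adjoin K (L '' LinearMap.ker (c j)))
    (hW : W ≤ ⨅ i, LinearMap.ker (c i)) :
    RegularOnMultiples s s (linkIdeal L ℓ y s W S) ∧
      ∀ v ∈ ⨅ i, LinearMap.ker (c i), v ∉ W →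
        RegularOnMultiples s (L v) (linkIdeal L ℓ y s W S) := by
  classical
  induction S using Finset.induction_on generalizing W with
  | empty =>
    rw [linkIdeal_empty]
    have := linearIdeal_isPrime hL W
    exact ⟨.of_isPrime id, fun v _ hv =>
      .of_isPrime fun h => (hv ((map_mem_linearIdeal_iff hL).1 h)).elim⟩
  | insert j S hj ih =>
    by_cases hjW : ℓ j ∈ W
    · have := self_mem_linkIdeal (L := L) (y := y) (s := s) (Finset.mem_insert_self j S) hjW
      exact ⟨.of_mem this, fun _ _ _ => .of_mem this⟩
    have hsj := hs j (Finset.mem_insert_self j S)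
    replace ih {W} := ih (W := W) fun i hi => hs i (Finset.mem_insert_of_mem hi)
    have step {r : T} (hr : r ∈ Algebra.adjoin K (L '' LinearMap.ker (c j)))
        (h : RegularOnMultiples s r (linkIdeal L ℓ y s W S))
        (h' : RegularOnMultiples s r (linkIdeal L ℓ y s (W ⊔ K ∙ ℓ j) S)) :
        RegularOnMultiples s r (linkIdeal L ℓ y s W (insert j S)) := by
      rw [linkIdeal_sup_span_map] at h'
      rw [linkIdeal_insert]
      exact .sup_span_sub_mul hL (hF.coord_self j)
        (hF.linkIdeal_le_ker_expandAlong hL hW hj hsj) hsj (map_mem_adjoin (hF.form_mem j) j) hr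
        ((ih hW).2 _ (hF.form_mem j) hjW) h h'
    have hW' := hF.sup_span_form_le hW j
    have self := step hsj (ih hW).1 (ih hW').1
    refine ⟨self, fun v hv hvW => ?_⟩
    by_cases hvW' : v ∈ W ⊔ K ∙ ℓ j
    · exact regularOnMultiples_of_mem_sup (Finset.mem_insert_self j S) hvW hvW' self
    · exact step (map_mem_adjoin hv j) ((ih hW).2 v hv hvW) ((ih hW').2 v hv hvW')

lemma depthAtLeast_linkIdeal_insert [DecidableEq ι] (hL : IsSymmetricAlgebra L)
    (hW : W ≤ ⨅ i, LinearMap.ker (c i)) (hj : j ∉ S)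
    (hs : s ∈ Algebra.adjoin K (L '' LinearMap.ker (c j)))
    (hls : ∀ f, L (ℓ j) * f ∈ linkIdeal L ℓ y s W S → s * f ∈ linkIdeal L ℓ y s W S)
    {𝔪 : Ideal T} {d : ℕ} (h : DepthAtLeast 𝔪 (linkIdeal L ℓ y s W S) (d + 1))
    (h' : DepthAtLeast 𝔪 (linkIdeal L ℓ y s (W ⊔ K ∙ ℓ j) S) d) :
    DepthAtLeast 𝔪 (linkIdeal L ℓ y s W (insert j S)) d := by
  rw [linkIdeal_sup_span_map] at h'
  rw [linkIdeal_insert]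
  exact h.sup_span_of_colon_eq (mul_mem_iff_sub_mul_mul_mem hL hs
    (map_mem_adjoin (hF.form_mem j) j) (hF.coord_self j)
    (hF.linkIdeal_le_ker_expandAlong hL hW hj hs) hls) h'

lemma depthAtLeast_linkIdeal_zero [FiniteDimensional K E]
    (hL : IsSymmetricAlgebra L) (hW : W ≤ ⨅ i, LinearMap.ker (c i)) {d : ℕ}
    (hd : d + Module.finrank K W + #S ≤ Module.finrank K E) :
    DepthAtLeast (linearIdeal L ⊤) (linkIdeal L ℓ y 0 W S) d := by
  classical
  induction S using Finset.induction_on generalizing W d with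
  | empty =>
    rw [linkIdeal_empty]
    exact depthAtLeast_linearIdeal hL W (by simpa using hd)
  | insert j S hj ih =>
    rw [Finset.card_insert_of_notMem hj] at hd
    have := finrank_sup_span_singleton_le W (ℓ j)
    exact hF.depthAtLeast_linkIdeal_insert hL hW hj (zero_mem _) (fun f _ => by simp)
      (ih hW (by omega)) (ih (hF.sup_span_form_le hW j) (by omega))

lemma depthAtLeast_linkIdeal [FiniteDimensional K E]
    (hL : IsSymmetricAlgebra L) (hW : W ≤ ⨅ i, LinearMap.ker (c i)) (ho : o ∉ S) {d : ℕ}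
    (hd : d + Module.finrank K W + #S ≤ Module.finrank K E) :
    DepthAtLeast (linearIdeal L ⊤) (linkIdeal L ℓ y (L (ℓ o) * L (y o)) W S) d := by
  classical
  induction S using Finset.induction_on generalizing W d with
  | empty =>
    rw [linkIdeal_empty]
    exact depthAtLeast_linearIdeal hL W (by simpa using hd)
  | insert j S hj ih =>
    obtain ⟨hoj, hoS⟩ := not_or.1 (Finset.mem_insert.not.1 ho)
    rw [Finset.card_insert_of_notMem hj] at hd
    by_cases hjW : ℓ j ∈ W
    · rw [linkIdeal_insert_eq_linkIdeal_zero rfl hjW]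
      exact hF.depthAtLeast_linkIdeal_zero hL hW (by rwa [Finset.card_insert_of_notMem hoS])
    have hs : ∀ i ≠ o, L (ℓ o) * L (y o) ∈ Algebra.adjoin K (L '' LinearMap.ker (c i)) :=
      fun i => hF.mul_mem_adjoin
    have hreg := (hF.regularOnMultiples_linkIdeal hL
      (fun i hi => hs i (ne_of_mem_of_not_mem hi hoS)) hW).2 _ (hF.form_mem j) hjW
    have := finrank_sup_span_singleton_le W (ℓ j)
    exact hF.depthAtLeast_linkIdeal_insert hL hW hj (hs j (Ne.symm hoj))
      (fun f hf => hreg f (Ideal.mul_mem_left _ _ hf)) (ih hW hoS (by omega))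
      (ih (hF.sup_span_form_le hW j) hoS (by omega))

end IsLinkFrame

end LinkIdeal

section RelationIdeal

variable {K : Type*} {ι σ : Type*} [Field K]

/-- The linear forms in the variables `X i` and `C (X a)` of `MvPolynomial ι (MvPolynomial σ K)`,
parametrized by their coefficients. -/
noncomputable def linearForm (K : Type*) (ι σ : Type*) [Field K] :
    (ι →₀ K) × (σ →₀ K) →ₗ[K] MvPolynomial ι (MvPolynomial σ K) :=
  (Finsupp.linearCombination K X).coprod (Finsupp.linearCombination K fun a => C (X a))

lemma linearForm_right (v : σ →₀ K) :
    linearForm K ι σ (0, v) = C (Finsupp.linearCombination K X v) := by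
  simp [linearForm, Finsupp.linearCombination_apply, Finsupp.sum, Algebra.smul_def]

lemma linearForm_basis (i : ι ⊕ σ) :
    linearForm K ι σ ((Finsupp.basisSingleOne.prod Finsupp.basisSingleOne) i) =
      Sum.elim X (fun a => C (X a)) i := by
  rcases i with i | a <;> simp [linearForm]

variable (K ι σ) in
lemma isSymmetricAlgebra_linearForm : IsSymmetricAlgebra (linearForm K ι σ) := by
  let b : Module.Basis (ι ⊕ σ) K ((ι →₀ K) × (σ →₀ K)) :=
    Finsupp.basisSingleOne.prod Finsupp.basisSingleOne
  refine .of_equiv ((SymmetricAlgebra.equivMvPolynomial b).trans (sumAlgEquiv K ι σ))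
    (b.ext fun i => ?_)
  rw [linearForm_basis]
  change sumAlgEquiv K ι σ (SymmetricAlgebra.equivMvPolynomial b (SymmetricAlgebra.ι K _ (b i))) = _
  rw [SymmetricAlgebra.equivMvPolynomial_ι_apply]
  rcases i with i | a <;> simp

lemma linearIdeal_linearForm_top : linearIdeal (linearForm K ι σ) ⊤ =
    Ideal.span ((Set.range fun a => C (X a)) ∪ Set.range X) := by
  rw [← (Finsupp.basisSingleOne.prod Finsupp.basisSingleOne).span_eq, linearIdeal_span,
    ← Set.range_comp, Set.union_comm, ← Set.Sum.elim_range]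
  exact congrArg (fun g => Ideal.span (Set.range g)) (funext linearForm_basis)

/-- The ideal of the relations `ℓ i * y i = ℓ j * y j`, where the `y i` are the outer variables. -/
noncomputable def relationIdeal (ℓ : ι → MvPolynomial σ K) :
    Ideal (MvPolynomial ι (MvPolynomial σ K)) :=
  Ideal.span (Set.range fun p : ι × ι => C (ℓ p.1) * X p.1 - C (ℓ p.2) * X p.2)

variable {ℓ : ι → MvPolynomial σ K}

lemma sub_mem_relationIdeal (i j : ι) : C (ℓ i) * X i - C (ℓ j) * X j ∈ relationIdeal ℓ :=
  Ideal.subset_span ⟨(i, j), rfl⟩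

lemma relationIdeal_le {I : Ideal (MvPolynomial ι (MvPolynomial σ K))} (o : ι)
    (h : ∀ j, C (ℓ o) * X o - C (ℓ j) * X j ∈ I) : relationIdeal ℓ ≤ I := by
  refine Ideal.span_le.2 (Set.range_subset_iff.2 fun p => ?_)
  simpa using sub_mem (h p.2) (h p.1)

lemma relationIdeal_eq_span_succ {n : ℕ} (ℓ : Fin (n + 1) → MvPolynomial σ K) :
    relationIdeal ℓ = Ideal.span (Set.range fun i : Fin n =>
      C (ℓ i.castSucc) * X i.castSucc - C (ℓ i.succ) * X i.succ) := by
  refine le_antisymm (relationIdeal_le 0 fun j => ?_)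
    (Ideal.span_le.2 (Set.range_subset_iff.2 fun i => sub_mem_relationIdeal _ _))
  induction j using Fin.induction with
  | zero => simp
  | succ i ih => simpa using add_mem ih (Ideal.subset_span (Set.mem_range_self i))

lemma relationIdeal_eq_linkIdeal [Fintype ι] [DecidableEq ι] {v : ι → σ →₀ K}
    (hv : ∀ j, Finsupp.linearCombination K X (v j) = ℓ j) (o : ι) :
    relationIdeal ℓ = linkIdeal (linearForm K ι σ) (fun j => (0, v j))
      (fun j => (Finsupp.single j 1, 0))
      (linearForm K ι σ (0, v o) * linearForm K ι σ (Finsupp.single o 1, 0)) ⊥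
      (univ.erase o) := by
  have hy (j : ι) : linearForm K ι σ (Finsupp.single j 1, 0) = X j := by simp [linearForm]
  rw [linearForm_right, hv, hy]
  refine le_antisymm (relationIdeal_le o fun j => ?_) (linkIdeal_le (fun u hu => ?_) fun j _ => ?_)
  · obtain rfl | hj := eq_or_ne j o
    · simp
    have hmem := sub_mem_linkIdeal (L := linearForm K ι σ) (ℓ := fun j => (0, v j))
      (y := fun j => (Finsupp.single j 1, 0)) (s := C (ℓ o) * X o) (W := ⊥)
      (Finset.mem_erase.2 ⟨hj, Finset.mem_univ j⟩)
    rwa [linearForm_right, hv, hy] at hmem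
  · rw [(Submodule.mem_bot K).1 hu, map_zero]
    exact zero_mem _
  · rw [linearForm_right, hv, hy]
    exact sub_mem_relationIdeal o j

lemma isLinkFrame_single (v : ι → σ →₀ K) :
    IsLinkFrame (E := (ι →₀ K) × (σ →₀ K)) (fun j => (0, v j))
      (fun j => (Finsupp.single j 1, 0)) (fun j => Finsupp.lapply j ∘ₗ LinearMap.fst K _ _) where
  coord_self j := by simp
  coord_ne hij := by simp [Finsupp.single_eq_of_ne hij]
  coord_form _ _ := by simp

lemma depthAtLeast_relationIdeal [Finite ι] [Nonempty ι] [Fintype σ]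
    (hℓ : ∀ j, (ℓ j).IsHomogeneous 1) :
    DepthAtLeast (linearIdeal (linearForm K ι σ) ⊤) (relationIdeal ℓ) (Fintype.card σ + 1) := by
  classical
  cases nonempty_fintype ι
  have exists_coeff (j : ι) : ∃ v : σ →₀ K, Finsupp.linearCombination K X v = ℓ j :=
    Finsupp.mem_span_range_iff_exists_finsupp.1
      (homogeneousSubmodule_one_eq_span_X (R := K) ▸ (mem_homogeneousSubmodule 1 (ℓ j)).2 (hℓ j))
  choose v hv using exists_coeff
  obtain ⟨o⟩ := ‹Nonempty ι›
  rw [relationIdeal_eq_linkIdeal hv o]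
  have hpos : 0 < Fintype.card ι := Fintype.card_pos_iff.2 ⟨o⟩
  refine (isLinkFrame_single v).depthAtLeast_linkIdeal (isSymmetricAlgebra_linearForm K ι σ)
    bot_le (Finset.notMem_erase o _) ?_
  rw [finrank_bot, Finset.card_erase_of_mem (Finset.mem_univ o), Finset.card_univ,
    Module.finrank_prod, Module.finrank_finsupp_self, Module.finrank_finsupp_self]
  omega

/-- The map `R[y_1, …, y_n] → R[t]` whose image is the Rees algebra `R[I t]` of the ideal `I`
generated by the products of all but one of the `a i`. -/
noncomputable def reesMap {R : Type*} [CommRing R] [Fintype ι] [DecidableEq ι] (a : ι → R) :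
    MvPolynomial ι R →ₐ[R] Polynomial R :=
  aeval fun j => Polynomial.C (∏ i ∈ univ.erase j, a i) * Polynomial.X

lemma reesMap_C_mul_X {R : Type*} [CommRing R] [Fintype ι] [DecidableEq ι] (a : ι → R) (j : ι) :
    reesMap a (C (a j) * X j) = Polynomial.C (∏ i, a i) * Polynomial.X := by
  simp [reesMap, ← mul_assoc, ← Finset.mul_prod_erase univ a (mem_univ j)]

lemma relationIdeal_le_ker_reesMap [Fintype ι] [DecidableEq ι] :
    relationIdeal ℓ ≤ RingHom.ker (reesMap ℓ) := by
  refine Ideal.span_le.2 (Set.range_subset_iff.2 fun p => ?_)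
  rw [SetLike.mem_coe, RingHom.mem_ker, map_sub, reesMap_C_mul_X, reesMap_C_mul_X, sub_self]

lemma C_mul_X_notMem_ker_reesMap [Fintype ι] [DecidableEq ι] (hℓ : ∀ j, ℓ j ≠ 0) (j : ι) :
    C (ℓ j) * X j ∉ RingHom.ker (reesMap ℓ) := by
  rw [RingHom.mem_ker, reesMap_C_mul_X]
  exact mul_ne_zero (Polynomial.C_ne_zero.2 (prod_ne_zero_iff.2 fun i _ => hℓ i))
    Polynomial.X_ne_zero

lemma ker_reesMap_le_linearIdeal [Fintype ι] [DecidableEq ι] :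
    RingHom.ker (reesMap ℓ) ≤ linearIdeal (linearForm K ι σ) ⊤ := by
  obtain ⟨ε, hε⟩ : ∃ ε : Polynomial (MvPolynomial σ K) →ₐ[K] K, ε.toLinearMap ∘ₗ
      ((reesMap ℓ).restrictScalars K).toLinearMap ∘ₗ linearForm K ι σ = 0 := by
    refine ⟨(aeval 0).comp ((Polynomial.aeval (0 : MvPolynomial σ K)).restrictScalars K),
      (Finsupp.basisSingleOne.prod Finsupp.basisSingleOne).ext fun i => ?_⟩
    rw [LinearMap.comp_apply, LinearMap.comp_apply, linearForm_basis]
    rcases i with i | a <;> simp [reesMap]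
  exact ker_le_linearIdeal_top (isSymmetricAlgebra_linearForm K ι σ)
    ((reesMap ℓ).restrictScalars K) ε hε

lemma trdeg_quotient_le_of_relationIdeal_le [Fintype σ]
    {P : Ideal (MvPolynomial ι (MvPolynomial σ K))} [P.IsPrime] (hP : relationIdeal ℓ ≤ P)
    (hℓ : ∀ j, C (ℓ j) ∉ P) (o : ι) :
    Algebra.trdeg K (MvPolynomial ι (MvPolynomial σ K) ⧸ P) ≤ (Fintype.card σ + 1 : ℕ) := by
  classical
  let q := Ideal.Quotient.mkₐ K P
  let s : Finset (MvPolynomial ι (MvPolynomial σ K) ⧸ P) :=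
    insert (q (X o)) (univ.image fun a => q (C (X a)))
  have mem_o : q (X o) ∈ Algebra.adjoin K (s : Set _) := Algebra.subset_adjoin (by simp [s])
  have mem_C (f : MvPolynomial σ K) : q (C f) ∈ Algebra.adjoin K (s : Set _) := by
    induction f using MvPolynomial.induction_on with
    | C r => exact Subalgebra.algebraMap_mem _ r
    | add f g hf hg => simpa using add_mem hf hg
    | mul_X f a hf => simpa using mul_mem hf (Algebra.subset_adjoin (by simp [s]))
  have hrel (j : ι) : q (C (ℓ j)) * q (X j) = q (C (ℓ o)) * q (X o) := by
    rw [← map_mul, ← map_mul]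
    exact Ideal.Quotient.eq.2 (hP (sub_mem_relationIdeal j o))
  refine (trdeg_le_cardinalMk_of_surjective (q.comp (sumAlgEquiv K ι σ).toAlgHom)
    ((Ideal.Quotient.mkₐ_surjective K P).comp (sumAlgEquiv K ι σ).surjective) s ?_).trans ?_
  · rintro (j | a)
    · refine ⟨q (C (ℓ j)), mem_C _, fun h => hℓ j (Ideal.Quotient.eq_zero_iff_mem.1 h), ?_⟩
      simpa [hrel] using mul_mem (mem_C (ℓ o)) mem_o
    · exact ⟨1, one_mem _, one_ne_zero, by simpa using mem_C (X a)⟩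
  · rw [Finset.coe_sort_coe, Cardinal.mk_coe_finset, Nat.cast_le]
    exact (card_insert_le _ _).trans (Nat.succ_le_succ card_image_le)

lemma exists_mem_associatedPrimes_quotient_relationIdeal [Finite ι] [Nonempty ι] [Fintype σ]
    (hℓ : ∀ j, ℓ j ≠ 0) :
    ∃ P ∈ associatedPrimes (MvPolynomial ι (MvPolynomial σ K))
        (MvPolynomial ι (MvPolynomial σ K) ⧸ relationIdeal ℓ),
      P ≤ linearIdeal (linearForm K ι σ) ⊤ ∧
      Algebra.trdeg K (MvPolynomial ι (MvPolynomial σ K) ⧸ P) ≤ (Fintype.card σ + 1 : ℕ) := by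
  classical
  cases nonempty_fintype ι
  obtain ⟨o⟩ := ‹Nonempty ι›
  have : (RingHom.ker (reesMap ℓ)).IsPrime := RingHom.ker_isPrime _
  obtain ⟨P, hP, hPle⟩ := Ideal.exists_minimalPrimes_le (relationIdeal_le_ker_reesMap (ℓ := ℓ))
  have := hP.isPrime
  refine ⟨P, Module.associatedPrimes.minimalPrimes_annihilator_subset_associatedPrimes _ _
    (by rwa [Ideal.annihilator_quotient]), hPle.trans ker_reesMap_le_linearIdeal,
    trdeg_quotient_le_of_relationIdeal_le hP.1.2 (fun j hj => ?_) o⟩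
  exact C_mul_X_notMem_ker_reesMap hℓ j (hPle (P.mul_mem_right _ hj))

variable [Finite ι] [Nonempty ι] [Fintype σ]

lemma exists_isRegular_quotient_relationIdeal (hℓ : ∀ j, (ℓ j).IsHomogeneous 1) :
    ∃ rs : List (MvPolynomial ι (MvPolynomial σ K)), rs.length = Fintype.card σ + 1 ∧
      (∀ r ∈ rs, r ∈ linearIdeal (linearForm K ι σ) ⊤) ∧
      RingTheory.Sequence.IsRegular (MvPolynomial ι (MvPolynomial σ K) ⧸ relationIdeal ℓ) rs := by
  classical
  cases nonempty_fintype ι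
  exact (depthAtLeast_relationIdeal hℓ).exists_isRegular
    (linearIdeal_isPrime (isSymmetricAlgebra_linearForm K ι σ) ⊤).ne_top
    (relationIdeal_le_ker_reesMap.trans ker_reesMap_le_linearIdeal)

lemma length_le_of_isWeaklyRegular_quotient_relationIdeal (hℓ : ∀ j, ℓ j ≠ 0)
    {rs : List (MvPolynomial ι (MvPolynomial σ K))}
    (hrs : ∀ r ∈ rs, r ∈ linearIdeal (linearForm K ι σ) ⊤)
    (hreg : RingTheory.Sequence.IsWeaklyRegular
      (MvPolynomial ι (MvPolynomial σ K) ⧸ relationIdeal ℓ) rs) :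
    rs.length ≤ Fintype.card σ + 1 := by
  have := linearIdeal_isPrime (isSymmetricAlgebra_linearForm K ι σ) ⊤
  obtain ⟨P, hP, hPle, htrdeg⟩ := exists_mem_associatedPrimes_quotient_relationIdeal hℓ
  have : Algebra.FiniteType K (MvPolynomial ι (MvPolynomial σ K)) :=
    .trans (S := MvPolynomial σ K) inferInstance inferInstance
  exact_mod_cast (length_le_trdeg_of_mem_associatedPrimes (K := K) hrs hreg hP hPle).trans htrdeg

end RelationIdeal

end ArrangementDepth

open ArrangementDepth in
theorem depth_of_symmetric_algebra_general
    {K : Type*} [Field K] {k n : ℕ} (hn : 0 < n)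
    (ℓ : Fin n → MvPolynomial (Fin k) K)
    (hhom : ∀ i, (ℓ i).IsHomogeneous 1)
    (hne : ∀ i, ℓ i ≠ 0)
    (I₁ : Ideal (MvPolynomial (Fin n) (MvPolynomial (Fin k) K)))
    (hI₁ : I₁ = Ideal.span (Set.range fun i : Fin (n - 1) =>
      C (ℓ ⟨i.1, by have := i.2; omega⟩) * X ⟨i.1, by have := i.2; omega⟩ -
        C (ℓ ⟨i.1 + 1, by have := i.2; omega⟩) * X ⟨i.1 + 1, by have := i.2; omega⟩))
    (mx : Ideal (MvPolynomial (Fin n) (MvPolynomial (Fin k) K)))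
    (hmx : mx = Ideal.span
      ((Set.range fun j : Fin k => (C (X j) : MvPolynomial (Fin n) (MvPolynomial (Fin k) K))) ∪
        Set.range (X : Fin n → MvPolynomial (Fin n) (MvPolynomial (Fin k) K)))) :
    (∃ rs : List (MvPolynomial (Fin n) (MvPolynomial (Fin k) K)),
      rs.length = k + 1 ∧ (∀ r ∈ rs, r ∈ mx) ∧
      RingTheory.Sequence.IsRegular
        (MvPolynomial (Fin n) (MvPolynomial (Fin k) K) ⧸ I₁) rs) ∧
    (∀ rs : List (MvPolynomial (Fin n) (MvPolynomial (Fin k) K)),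
      (∀ r ∈ rs, r ∈ mx) →
      RingTheory.Sequence.IsRegular
        (MvPolynomial (Fin n) (MvPolynomial (Fin k) K) ⧸ I₁) rs →
      rs.length ≤ k + 1) := by
  obtain ⟨m, rfl⟩ := Nat.exists_eq_add_one_of_ne_zero hn.ne'
  obtain rfl : I₁ = relationIdeal ℓ := hI₁.trans (relationIdeal_eq_span_succ ℓ).symm
  obtain rfl : mx = linearIdeal (linearForm K (Fin (m + 1)) (Fin k)) ⊤ :=
    hmx.trans linearIdeal_linearForm_top.symm
  refine ⟨?_, fun rs hrs hreg => ?_⟩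
  · simpa using exists_isRegular_quotient_relationIdeal hhom
  · simpa using length_le_of_isWeaklyRegular_quotient_relationIdeal hne hrs hreg.toIsWeaklyRegular

/-- **Garrousian–Simis–Tohaneanu, Proposition 4.8**: the symmetric algebra
`𝒮(I) ≅ T/I_1(𝒜,n-1)` of the ideal of `(n-1)`-fold products has depth exactly `k+1` with
respect to the graded maximal ideal `⟨x_1,…,x_k,y_1,…,y_n⟩` of `T`: there is a regular sequence
of length `k+1` on `T/I_1(𝒜,n-1)` consisting of elements of the graded maximal ideal, and every
such regular sequence has length at most `k+1`. -/
theorem depth_of_symmetric_algebra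
    {K : Type*} [Field K] {k n : ℕ} (hk : 2 ≤ k) (hkn : k ≤ n)
    (ℓ : Fin n → MvPolynomial (Fin k) K)
    (hhom : ∀ i, (ℓ i).IsHomogeneous 1)
    (hprop : ∀ i j, i ≠ j → ∀ c : K, ℓ j ≠ c • ℓ i)
    (hspan : Submodule.span K (Set.range ℓ) =
      Submodule.span K (Set.range (X : Fin k → MvPolynomial (Fin k) K)))
    (I₁ : Ideal (MvPolynomial (Fin n) (MvPolynomial (Fin k) K)))
    (hI₁ : I₁ = Ideal.span (Set.range fun i : Fin (n - 1) =>
      C (ℓ ⟨i.1, by have := i.2; omega⟩) * X ⟨i.1, by have := i.2; omega⟩ -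
        C (ℓ ⟨i.1 + 1, by have := i.2; omega⟩) * X ⟨i.1 + 1, by have := i.2; omega⟩))
    (mx : Ideal (MvPolynomial (Fin n) (MvPolynomial (Fin k) K)))
    (hmx : mx = Ideal.span
      ((Set.range fun j : Fin k => (C (X j) : MvPolynomial (Fin n) (MvPolynomial (Fin k) K))) ∪
        Set.range (X : Fin n → MvPolynomial (Fin n) (MvPolynomial (Fin k) K)))) :
    (∃ rs : List (MvPolynomial (Fin n) (MvPolynomial (Fin k) K)),
      rs.length = k + 1 ∧ (∀ r ∈ rs, r ∈ mx) ∧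
      RingTheory.Sequence.IsRegular
        (MvPolynomial (Fin n) (MvPolynomial (Fin k) K) ⧸ I₁) rs) ∧
    (∀ rs : List (MvPolynomial (Fin n) (MvPolynomial (Fin k) K)),
      (∀ r ∈ rs, r ∈ mx) →
      RingTheory.Sequence.IsRegular
        (MvPolynomial (Fin n) (MvPolynomial (Fin k) K) ⧸ I₁) rs →
      rs.length ≤ k + 1) := by
  have : Nontrivial (Fin n) := Fin.nontrivial_iff_two_le.2 (hk.trans hkn)
  have hne (j : Fin n) : ℓ j ≠ 0 := (exists_ne j).elim fun i hij => by simpa using hprop i j hij 0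
  exact depth_of_symmetric_algebra_general (by omega) ℓ hhom hne I₁ hI₁ mx hmx
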